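/- Fix λ > 0 and for intuitionistic fuzzy values α, β define the parametric divergence JS^{(λ)}(α, β) = √(Z_λ(α, β)/2), where Z_λ(α,β) = L(1−μ_α^λ, 1−μ_β^λ) + L(ν_α^λ, ν_β^λ). Then JS^{(λ)}(α, β) = 0 if and only if α = β, and if α ⊊ β₁ ⊊ β₂ in Atanassov's order then JS^{(λ)}(α, β₁) < JS^{(λ)}(α, β₂). -/

import Mathlib

/-- `L p q = p·log₂(2p/(p+q)) + q·log₂(2q/(p+q))`, with Lean's conventions
`0 * log₂ _ = 0` and `x / 0 = 0`, `log₂ 0 = 0` implementing `0·log 0 = 0`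
and `0·log(0/0) = 0`. -/
noncomputable def L (p q : ℝ) : ℝ :=
  p * Real.logb 2 (2 * p / (p + q)) + q * Real.logb 2 (2 * q / (p + q))

/-- An intuitionistic fuzzy value: a pair `⟨μ, ν⟩` with `0 ≤ μ`, `0 ≤ ν`,
`μ + ν ≤ 1` (hence also `μ ≤ 1` and `ν ≤ 1`). -/
@[ext]
structure IFV where
  mu : ℝ
  nu : ℝ
  mu_nonneg : 0 ≤ mu
  nu_nonneg : 0 ≤ nu
  sum_le : mu + nu ≤ 1

/-- `Z(α,β) = L(1−μ_α, 1−μ_β) + L(ν_α, ν_β)`. -/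
noncomputable def Z (a b : IFV) : ℝ := L (1 - a.mu) (1 - b.mu) + L a.nu b.nu

/-- The normalized Jensen–Shannon IF divergence `JS(α,β) = √(Z(α,β)/2)`. -/
noncomputable def JS (a b : IFV) : ℝ := Real.sqrt (Z a b / 2)

/-- Atanassov's order: `α ⊂ β` iff `μ_α ≤ μ_β` and `ν_α ≥ ν_β`. -/
def IFV.sub (a b : IFV) : Prop := a.mu ≤ b.mu ∧ b.nu ≤ a.nu

/-- Strict Atanassov order: `α ⊊ β` iff `α ⊂ β` and `α ≠ β`. -/
def IFV.ssub (a b : IFV) : Prop := a.sub b ∧ a ≠ b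

/-- The IFV `⟨1, 0⟩`. -/
def IFV.posOne : IFV := ⟨1, 0, by norm_num, le_rfl, by norm_num⟩

/-- The IFV `⟨0, 1⟩`. -/
def IFV.negOne : IFV := ⟨0, 1, le_rfl, by norm_num, by norm_num⟩

/-- The parametric Jensen–Shannon IF divergence
`JS^{(λ)}(α,β) = √(Z_λ(α,β)/2)` with
`Z_λ(α,β) = L(1−μ_α^λ, 1−μ_β^λ) + L(ν_α^λ, ν_β^λ)` (real powers). -/
noncomputable def JSl (l : ℝ) (a b : IFV) : ℝ :=
  Real.sqrt ((L (1 - a.mu ^ l) (1 - b.mu ^ l) + L (a.nu ^ l) (b.nu ^ l)) / 2)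

theorem L_eq_negMulLog (p q : ℝ) (hp : 0 < p) (hq : 0 ≤ q) :
    L p q = (p * Real.log p + q * Real.log q
      - 2 * ((p + q) / 2 * Real.log ((p + q) / 2))) / Real.log 2 := by
  have h1 : ∀ x : ℝ, 0 < x → Real.log (2 * x / (p + q)) = Real.log x - Real.log ((p + q) / 2) := by
    intro x hx
    rw [← Real.log_div hx.ne' (by positivity)]
    congr 1
    field_simp
  unfold L Real.logb
  rw [h1 p hp]
  rcases hq.eq_or_lt with h | h
  · subst h; simp; ring
  · rw [h1 q h]; ring

theorem L_strictAntiOn (p : ℝ) (hp : 0 < p) : StrictAntiOn (fun q => L p q) (Set.Icc 0 p) := by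
  have hl2 : 0 < Real.log 2 := Real.log_pos (by norm_num)
  have key : StrictAntiOn (fun q : ℝ => p * Real.log p + q * Real.log q
      - 2 * ((p + q) / 2 * Real.log ((p + q) / 2))) (Set.Icc 0 p) := by
    apply strictAntiOn_of_deriv_neg (convex_Icc 0 p)
    · apply Continuous.continuousOn
      have h1 := Real.continuous_mul_log
      have h2 : Continuous (fun q : ℝ => (p + q) / 2 * Real.log ((p + q) / 2)) :=
        h1.comp (g := fun x : ℝ => x * Real.log x) (f := fun q : ℝ => (p + q) / 2) (by fun_prop)
      exact (continuous_const.add h1).sub (continuous_const.mul h2)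
    · intro x hx
      rw [interior_Icc] at hx
      obtain ⟨hx0, hxp⟩ := hx
      have e1 := Real.hasDerivAt_mul_log hx0.ne'
      have hm : (p + x) / 2 ≠ 0 := by positivity
      have e0 : HasDerivAt (fun q : ℝ => (p + q) / 2) (1 / 2) x :=
        ((hasDerivAt_id x).const_add p).div_const 2
      have e2 := (Real.hasDerivAt_mul_log hm).comp x e0
      have e3 := (e1.const_add (p * Real.log p)).sub (e2.const_mul 2)
      have e4 : deriv (fun q : ℝ => p * Real.log p + q * Real.log q
        - 2 * ((p + q) / 2 * Real.log ((p + q) / 2))) x = _ := e3.deriv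
      rw [e4]
      have := Real.log_lt_log hx0 (show x < (p + x) / 2 by linarith)
      linarith
  intro a ha b hb hab
  have := key ha hb hab
  simp only [L_eq_negMulLog p _ hp ha.1, L_eq_negMulLog p _ hp hb.1]
  exact div_lt_div_of_pos_right this hl2

theorem L_self (p : ℝ) (hp : 0 ≤ p) : L p p = 0 := by
  rcases hp.eq_or_lt with h | h
  · subst h; simp [L]
  · have : 2 * p / (p + p) = 1 := by field_simp; norm_num
    simp [L, this]

theorem L_symm (p q : ℝ) : L p q = L q p := by
  unfold L; rw [add_comm q p]; ring

theorem L_pos_of_ne (p q : ℝ) (hp : 0 ≤ p) (hq : 0 ≤ q) (h : p ≠ q) : 0 < L p q := by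
  rcases lt_or_gt_of_ne h with h | h
  · rw [L_symm, ← L_self q hq]
    exact L_strictAntiOn q (by linarith) ⟨hp, h.le⟩ ⟨hq, le_rfl⟩ h
  · rw [← L_self p hp]
    exact L_strictAntiOn p (by linarith) ⟨hq, h.le⟩ ⟨hp, le_rfl⟩ h

theorem L_nonneg (p q : ℝ) (hp : 0 ≤ p) (hq : 0 ≤ q) : 0 ≤ L p q := by
  by_cases h : p = q
  · subst h; exact (L_self p hp).ge
  · exact (L_pos_of_ne p q hp hq h).le

theorem L_lt (p q r : ℝ) (hr : 0 ≤ r) (hrq : r < q) (hqp : q ≤ p) : L p q < L p r :=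
  L_strictAntiOn p (by linarith) ⟨hr, by linarith⟩ ⟨by linarith, hqp⟩ hrq

theorem L_le (p q r : ℝ) (hr : 0 ≤ r) (hrq : r ≤ q) (hqp : q ≤ p) : L p q ≤ L p r := by
  rcases hrq.eq_or_lt with h | h
  · rw [h]
  · exact (L_lt p q r hr h hqp).le

theorem JSl_eq_zero_iff_and_strictMono (l : ℝ) (hl : 0 < l) :
    (∀ a b : IFV, JSl l a b = 0 ↔ a = b) ∧
    (∀ a b1 b2 : IFV, a.ssub b1 → b1.ssub b2 → JSl l a b1 < JSl l a b2) := by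
  have hm : ∀ a : IFV, 0 ≤ 1 - a.mu ^ l := fun a => by
    have := Real.rpow_le_one a.mu_nonneg (by linarith [a.nu_nonneg, a.sum_le]) hl.le
    linarith
  have hn : ∀ a : IFV, 0 ≤ a.nu ^ l := fun a => Real.rpow_nonneg a.nu_nonneg l
  have hA : ∀ a b : IFV, 0 ≤ L (1 - a.mu ^ l) (1 - b.mu ^ l) :=
    fun a b => L_nonneg _ _ (hm a) (hm b)
  have hB : ∀ a b : IFV, 0 ≤ L (a.nu ^ l) (b.nu ^ l) :=
    fun a b => L_nonneg _ _ (hn a) (hn b)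
  refine ⟨fun a b => ⟨fun h => ?_, fun h => ?_⟩, fun a b1 b2 h1 h2 => ?_⟩
  · unfold JSl at h
    rw [Real.sqrt_eq_zero (by linarith [hA a b, hB a b])] at h
    have hA0 : L (1 - a.mu ^ l) (1 - b.mu ^ l) = 0 := by linarith [hA a b, hB a b]
    have hB0 : L (a.nu ^ l) (b.nu ^ l) = 0 := by linarith [hA a b, hB a b]
    ext
    · by_contra hne
      refine (L_pos_of_ne _ _ (hm a) (hm b) fun he => hne ?_).ne' hA0
      exact (Real.rpow_left_inj a.mu_nonneg b.mu_nonneg hl.ne').1 (by linarith)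
    · by_contra hne
      refine (L_pos_of_ne _ _ (hn a) (hn b) fun he => hne ?_).ne' hB0
      exact (Real.rpow_left_inj a.nu_nonneg b.nu_nonneg hl.ne').1 he
  · subst h
    simp [JSl, L_self _ (hm a), L_self _ (hn a)]
  · obtain ⟨⟨m1, n1⟩, -⟩ := h1
    obtain ⟨⟨m2, n2⟩, hne⟩ := h2
    have m1l := Real.rpow_le_rpow a.mu_nonneg m1 hl.le
    have m2l := Real.rpow_le_rpow b1.mu_nonneg m2 hl.le
    have n1l := Real.rpow_le_rpow b1.nu_nonneg n1 hl.le
    have n2l := Real.rpow_le_rpow b2.nu_nonneg n2 hl.le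
    have hAle := L_le (1 - a.mu ^ l) (1 - b1.mu ^ l) (1 - b2.mu ^ l) (hm b2)
      (by linarith) (by linarith)
    have hBle := L_le (a.nu ^ l) (b1.nu ^ l) (b2.nu ^ l) (hn b2) n2l n1l
    unfold JSl
    apply Real.sqrt_lt_sqrt (by linarith [hA a b1, hB a b1])
    rcases m2.eq_or_lt with hme | hml
    · rcases n2.eq_or_lt with hne2 | hnl
      · exact absurd (IFV.ext hme hne2.symm) hne
      · have := L_lt (a.nu ^ l) (b1.nu ^ l) (b2.nu ^ l) (hn b2)
          (Real.rpow_lt_rpow b2.nu_nonneg hnl hl) n1l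
        linarith
    · have := Real.rpow_lt_rpow b1.mu_nonneg hml hl
      have := L_lt (1 - a.mu ^ l) (1 - b1.mu ^ l) (1 - b2.mu ^ l) (hm b2)
        (by linarith) (by linarith)
      linarith
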